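/- arXiv:2106.02265 — 3 statements merged into one kernel-verified Lean document; each statement's English description precedes it below -/
import Mathlib

section
/- Let F be a finite field of characteristic p > 5 with |F| = q ≡ 1 or 19 (mod 30), and G = C_3 × D_10. Then the group algebra FG is semisimple and FG ≅ F⁶ ⊕ M₂(F)⁶ as F-algebras. -/
instance fact5 : Fact (Nat.Prime 5) := ⟨by norm_num⟩

lemma four_eq : ((4 : ℕ) : ZMod 5) = -1 := by decide

lemma quad_aux : ∀ x : ZMod 4, ∀ y : ZMod 5, y = 1 ∨ y = -1 →
    quadraticChar (ZMod 5) ((ZMod.χ₄ x : ℤ) * y) ≠ -1 := by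
  decide

lemma aux_pow_val {M : Type*} [Monoid M] {n : ℕ} [NeZero n] {R : M} (h : R ^ n = 1) (i j : ZMod n) :
    R ^ (i + j).val = R ^ i.val * R ^ j.val := by
  rw [ZMod.val_add, ← pow_add, ← pow_eq_pow_mod _ h]

lemma aux_conj {M : Type*} [Monoid M] {R S : M} (h : R * S * R = S) (n : ℕ) :
    R ^ n * S * R ^ n = S := by
  induction n with
  | zero => simp
  | succ n ih =>
    rw [pow_succ R n]
    nth_rewrite 2 [← pow_succ R n]
    rw [pow_succ' R n]
    calc R ^ n * R * S * (R * R ^ n) = R ^ n * (R * S * R) * R ^ n := by simp only [mul_assoc]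
      _ = S := by rw [h, ih]

/-- The representation of the dihedral group with given images of the generators. -/
def dihRep {M : Type*} [Monoid M] (R S : M) (h5 : R ^ 5 = 1) (hS : S * S = 1)
    (h : R * S * R = S) : DihedralGroup 5 →* M where
  toFun g := match g with
    | .r i => R ^ i.val
    | .sr i => S * R ^ i.val
  map_one' := by
    change R ^ (0 : ZMod 5).val = 1
    simp
  map_mul' := by
    have key : ∀ i j : ZMod 5, R ^ i.val * S * R ^ j.val = S * R ^ (j - i).val := by
      intro i j
      have e : j = i + (j - i) := by ring
      conv_lhs => rw [e, aux_pow_val h5, ← mul_assoc, aux_conj h]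
    rintro (i | i) (j | j)
    · exact aux_pow_val h5 i j
    · change S * R ^ (j - i).val = R ^ i.val * (S * R ^ j.val)
      rw [← mul_assoc, key]
    · change S * R ^ (i + j).val = S * R ^ i.val * R ^ j.val
      rw [aux_pow_val h5, mul_assoc]
    · change R ^ (j - i).val = S * R ^ i.val * (S * R ^ j.val)
      have : S * R ^ i.val * (S * R ^ j.val) = S * (R ^ i.val * S * R ^ j.val) := by
        simp only [mul_assoc]
      rw [this, key, ← mul_assoc, hS, one_mul]

/-- Representation of the product group twisted by a cube root of unity. -/
def prodRep {F A : Type*} [Field F] [Ring A] [Algebra F A] (c : F) (hc : c ^ 3 = 1)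
    (ρ : DihedralGroup 5 →* A) : Multiplicative (ZMod 3) × DihedralGroup 5 →* A where
  toFun g := c ^ (g.1.toAdd).val • ρ g.2
  map_one' := by simp
  map_mul' := by
    rintro ⟨a, g⟩ ⟨b, h⟩
    simp only [Prod.mk_mul_mk, toAdd_mul, aux_pow_val hc, map_mul]
    rw [smul_mul_smul_comm]

section
variable {F : Type} [Field F]

lemma R_sq (t : F) (ht : t ^ 2 + t - 1 = 0) :
    (!![0, -1; 1, t] : Matrix (Fin 2) (Fin 2) F) ^ 2 = !![-1, -t; t, -t] := by
  rw [pow_two, Matrix.mul_fin_two]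
  ext i j
  fin_cases i <;> fin_cases j <;> simp
  linear_combination ht

lemma R_cu (t : F) (ht : t ^ 2 + t - 1 = 0) :
    (!![0, -1; 1, t] : Matrix (Fin 2) (Fin 2) F) ^ 3 = !![-t, t; -t, -1] := by
  rw [pow_succ, R_sq t ht, Matrix.mul_fin_two]
  ext i j
  fin_cases i <;> fin_cases j <;> simp
  all_goals linear_combination -ht

lemma R_4 (t : F) (ht : t ^ 2 + t - 1 = 0) :
    (!![0, -1; 1, t] : Matrix (Fin 2) (Fin 2) F) ^ 4 = !![t, 1; -1, 0] := by
  rw [pow_succ, R_cu t ht, Matrix.mul_fin_two]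
  ext i j
  fin_cases i <;> fin_cases j <;> simp
  linear_combination ht

lemma R_5 (t : F) (ht : t ^ 2 + t - 1 = 0) :
    (!![0, -1; 1, t] : Matrix (Fin 2) (Fin 2) F) ^ 5 = 1 := by
  rw [pow_succ, R_4 t ht, Matrix.mul_fin_two]
  ext i j
  fin_cases i <;> fin_cases j <;> simp

/-- Two-dimensional representation. -/
def matRep (t : F) (ht : t ^ 2 + t - 1 = 0) : DihedralGroup 5 →* Matrix (Fin 2) (Fin 2) F :=
  dihRep !![0, -1; 1, t] !![0, 1; 1, 0] (R_5 t ht)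
    (by ext i j; fin_cases i <;> fin_cases j <;> simp)
    (by ext i j; fin_cases i <;> fin_cases j <;> simp)

/-- One-dimensional representation. -/
def signRep (s : F) (hs : s * s = 1) : DihedralGroup 5 →* F :=
  dihRep 1 s (by simp) hs (by simp)

lemma signRep_r (s : F) (hs : s * s = 1) (i : ZMod 5) : signRep s hs (.r i) = 1 := by
  change (1 : F) ^ _ = 1
  simp

lemma signRep_sr (s : F) (hs : s * s = 1) (i : ZMod 5) : signRep s hs (.sr i) = s := by
  change s * (1 : F) ^ _ = s
  simp

lemma matRep_sr (t : F) (ht : t ^ 2 + t - 1 = 0) (i : ZMod 5) :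
    (matRep t ht (.sr i)).trace = 0 := by
  change (!![0, 1; 1, 0] * (!![0, -1; 1, t] : Matrix (Fin 2) (Fin 2) F) ^ i.val).trace = 0
  have : i.val < 5 := i.val_lt
  generalize i.val = n at *
  interval_cases n
  · simp [Matrix.trace]
  · simp [Matrix.trace]
  · rw [R_sq t ht]; simp [Matrix.trace]
  · rw [R_cu t ht]; simp [Matrix.trace]
  · rw [R_4 t ht]; simp [Matrix.trace]

lemma matRep_r (t t' : F) (ht : t ^ 2 + t - 1 = 0) (ht' : t' ^ 2 + t' - 1 = 0)
    (hs : t + t' = -1) (i : ZMod 5) :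
    2 + 2 * (matRep t ht (.r i)).trace + 2 * (matRep t' ht' (.r i)).trace
      = if i = 0 then 10 else 0 := by
  change 2 + 2 * ((!![0, -1; 1, t] : Matrix (Fin 2) (Fin 2) F) ^ i.val).trace
    + 2 * ((!![0, -1; 1, t'] : Matrix (Fin 2) (Fin 2) F) ^ i.val).trace = _
  have : i.val < 5 := i.val_lt
  simp only [← ZMod.val_eq_zero]
  generalize i.val = n at *
  interval_cases n
  · simp [Matrix.trace]; norm_num
  · simp [Matrix.trace]; linear_combination 2 * hs
  · rw [R_sq t ht, R_sq t' ht']; simp [Matrix.trace]; linear_combination -2 * hs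
  · rw [R_cu t ht, R_cu t' ht']; simp [Matrix.trace]; linear_combination -2 * hs
  · rw [R_4 t ht, R_4 t' ht']; simp [Matrix.trace]; linear_combination 2 * hs

theorem iso_of_roots (w t : F) (hw : w ^ 2 + w + 1 = 0) (ht : t ^ 2 + t - 1 = 0)
    (h30 : (30 : F) ≠ 0) :
    Nonempty (MonoidAlgebra F (Multiplicative (ZMod 3) × DihedralGroup 5) ≃ₐ[F]
      ((Fin 6 → F) × (Fin 6 → Matrix (Fin 2) (Fin 2) F))) := by
  let G := Multiplicative (ZMod 3) × DihedralGroup 5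
  let cs : Fin 6 → F := ![1, 1, w, w, w ^ 2, w ^ 2]
  let ss : Fin 6 → F := ![1, -1, 1, -1, 1, -1]
  let ts : Fin 6 → F := ![t, -1 - t, t, -1 - t, t, -1 - t]
  have ht' : (-1 - t) ^ 2 + (-1 - t) - 1 = 0 := by linear_combination ht
  have hw3 : w ^ 3 = 1 := by linear_combination (w - 1) * hw
  have hcs : ∀ i, cs i ^ 3 = 1 := by
    have h6 : (w ^ 2) ^ 3 = 1 := by rw [← pow_mul, mul_comm, pow_mul, hw3, one_pow]
    intro i; fin_cases i <;> simp [cs, hw3, h6]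
  have hss : ∀ i, ss i * ss i = 1 := by intro i; fin_cases i <;> simp [ss]
  have hts : ∀ i, ts i ^ 2 + ts i - 1 = 0 := by
    intro i; fin_cases i <;> simp only [ts] <;> first | exact ht | exact ht'
  let Φ : MonoidAlgebra F G →ₐ[F] ((Fin 6 → F) × (Fin 6 → Matrix (Fin 2) (Fin 2) F)) :=
    AlgHom.prod
      (AlgHom.pi fun i => MonoidAlgebra.lift F _ G (prodRep (cs i) (hcs i) (signRep (ss i) (hss i))))
      (AlgHom.pi fun i => MonoidAlgebra.lift F _ G (prodRep (cs i) (hcs i) (matRep (ts i) (hts i))))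
  let L : ((Fin 6 → F) × (Fin 6 → Matrix (Fin 2) (Fin 2) F)) →ₗ[F] F :=
    { toFun := fun x => ∑ i, x.1 i + 2 * ∑ i, (x.2 i).trace
      map_add' := by
        intro x y
        simp [Finset.sum_add_distrib]; ring
      map_smul' := by
        intro c x
        simp [← Finset.mul_sum]; ring }
  have hL : ∀ g : G, L (Φ (MonoidAlgebra.single g 1)) = if g = 1 then 30 else 0 := by
    rintro ⟨a, g⟩
    have h1 : L (Φ (MonoidAlgebra.single (a, g) 1)) =
        ∑ i, cs i ^ a.toAdd.val * signRep (ss i) (hss i) g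
        + 2 * ∑ i, cs i ^ a.toAdd.val * (matRep (ts i) (hts i) g).trace := by
      simp [L, Φ, prodRep]
    have h2 : L (Φ (MonoidAlgebra.single (a, g) 1)) =
        (1 + w ^ a.toAdd.val + (w ^ 2) ^ a.toAdd.val) *
        (signRep 1 (by simp) g + signRep (-1) (by simp) g + 2 * (matRep t ht g).trace
          + 2 * (matRep (-1 - t) ht' g).trace) := by
      rw [h1]
      simp [Fin.sum_univ_six, cs, ss, ts]
      ring
    rw [h2]
    have h3 : (1 + w ^ a.toAdd.val + (w ^ 2) ^ a.toAdd.val) = if a = 1 then 3 else 0 := by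
      have e : a = 1 ↔ a.toAdd.val = 0 := by rw [ZMod.val_eq_zero]; rfl
      simp only [e]
      have : a.toAdd.val < 3 := ZMod.val_lt _
      generalize a.toAdd.val = n at *
      interval_cases n
      · norm_num
      · simp; linear_combination hw
      · simp; linear_combination (w ^ 2 - w + 1) * hw
    rw [h3]
    rcases g with i | i
    · rw [signRep_r, signRep_r, show (1 + 1 : F) = 2 by norm_num,
        matRep_r _ _ _ _ (by ring)]
      have e : ((a, DihedralGroup.r i) : G) = 1 ↔ a = 1 ∧ i = 0 := by
        rw [Prod.ext_iff]
        simp [DihedralGroup.one_def, -DihedralGroup.r_zero]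
      simp only [e]
      by_cases ha : a = 1 <;> by_cases hi : i = 0 <;> simp [ha, hi]
      norm_num
    · rw [signRep_sr, signRep_sr, matRep_sr, matRep_sr]
      have e : ¬ ((a, DihedralGroup.sr i) : G) = 1 := by
        rw [Prod.ext_iff]
        simp [DihedralGroup.one_def, -DihedralGroup.r_zero]
      simp [e]
  have hL' : ∀ f : MonoidAlgebra F G, L (Φ f) = 30 * f.coeff 1 := by
    intro f
    induction f using MonoidAlgebra.induction_linear with
    | zero => simp
    | add f g hf hg => simp [hf, hg, mul_add]
    | single g c =>
      have : MonoidAlgebra.single g c = c • MonoidAlgebra.single g (1 : F) := by simp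
      rw [this, map_smul, map_smul, hL]
      by_cases h : g = 1 <;> simp [h, mul_comm]
  have hinj : Function.Injective Φ := by
    rw [injective_iff_map_eq_zero]
    intro f hf
    ext g
    have := hL' (f * MonoidAlgebra.single g⁻¹ 1)
    rw [map_mul, hf, zero_mul, map_zero] at this
    simp at this
    have hgg : (g⁻¹)⁻¹ = g := inv_inv (G := Multiplicative (ZMod 3) × DihedralGroup 5) g
    erw [hgg] at this
    simpa [h30] using this
  have hfin : Module.finrank F (MonoidAlgebra F G) =
      Module.finrank F ((Fin 6 → F) × (Fin 6 → Matrix (Fin 2) (Fin 2) F)) := by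
    rw [Module.finrank_eq_nat_card_basis (MonoidAlgebra.basis G F)]
    have : Nat.card G = 30 := by
      simp [G, DihedralGroup.card]
    rw [this]
    rw [Module.finrank_prod, Module.finrank_pi_fintype, Module.finrank_pi_fintype]
    simp [Module.finrank_matrix]
  have hsurj : Function.Surjective Φ :=
    (LinearMap.injective_iff_surjective_of_finrank_eq_finrank (f := Φ.toLinearMap) hfin).1 hinj
  exact ⟨AlgEquiv.ofBijective Φ ⟨hinj, hsurj⟩⟩
end

/-- For `F` a finite field of characteristic `p > 5` with `q ≡ 1, 19 (mod 30)` and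
`G = C₃ × D₁₀`, the group algebra `FG` is semisimple and `FG ≅ F⁶ ⊕ M₂(F)⁶` as
`F`-algebras. -/
theorem stmt_16 (F : Type) [Field F] [Fintype F] (p : ℕ) (hchar : CharP F p) (hp : 5 < p)
    (hq : Fintype.card F % 30 = 1 ∨ Fintype.card F % 30 = 19) :
    let G := Multiplicative (ZMod 3) × DihedralGroup 5
    IsSemisimpleRing (MonoidAlgebra F G) ∧
    Nonempty (MonoidAlgebra F G ≃ₐ[F]
      ((Fin 6 → F) × (Fin 6 → Matrix (Fin 2) (Fin 2) F))) := by
  intro G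
  have hpp : p.Prime := (CharP.char_is_prime_or_zero F p).resolve_right (by omega)
  have hne : ∀ n : ℕ, n.Prime → n ≤ 5 → (n : F) ≠ 0 := by
    intro n hn h5 h
    have := (CharP.cast_eq_zero_iff F p n).1 h
    have := Nat.le_of_dvd hn.pos this
    omega
  have h2 : (2 : F) ≠ 0 := by exact_mod_cast hne 2 (by norm_num) (by norm_num)
  have h3 : (3 : F) ≠ 0 := by exact_mod_cast hne 3 (by norm_num) (by norm_num)
  have h5 : (5 : F) ≠ 0 := by exact_mod_cast hne 5 (by norm_num) (by norm_num)
  have h30 : (30 : F) ≠ 0 := by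
    rw [show (30 : F) = 2 * 3 * 5 by norm_num]
    exact mul_ne_zero (mul_ne_zero h2 h3) h5
  have hF2 : ringChar F ≠ 2 := by
    rw [ringChar.eq F p]; omega
  classical
  obtain ⟨w, hw⟩ : ∃ w : F, w ^ 2 + w + 1 = 0 := by
    have : Fact (Nat.Prime 3) := ⟨by norm_num⟩
    obtain ⟨u, hu⟩ := exists_prime_orderOf_dvd_card (G := Fˣ) 3 (by
      rw [Fintype.card_units]; omega)
    refine ⟨u, ?_⟩
    have h1 : u ^ 3 = 1 := by rw [← hu]; exact pow_orderOf_eq_one u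
    have h1' : (u : F) ^ 3 = 1 := by
      have := congrArg Units.val h1
      simpa using this
    have h2 : (u : F) ≠ 1 := by
      intro h
      have : u = 1 := Units.ext h
      rw [this] at hu; simp at hu
    apply mul_left_cancel₀ (sub_ne_zero.2 h2)
    linear_combination h1'
  obtain ⟨s, hs⟩ : IsSquare (5 : F) := by
    have := (FiniteField.isSquare_odd_prime_iff hF2 (p := 5) (by norm_num)).2 (by
      have hc : ((Fintype.card F : ℕ) : ZMod 5) = 1 ∨ ((Fintype.card F : ℕ) : ZMod 5) = -1 := by
        rcases hq with hq | hq
        · left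
          have : Fintype.card F % 5 = 1 % 5 := by omega
          exact_mod_cast (ZMod.natCast_eq_natCast_iff' _ 1 5).2 this
        · right
          have : Fintype.card F % 5 = 4 % 5 := by omega
          rw [(ZMod.natCast_eq_natCast_iff' _ 4 5).2 this]
          exact four_eq
      exact quad_aux _ _ hc)
    exact_mod_cast this
  have hiso := iso_of_roots w ((s - 1) / 2) hw (by field_simp; linear_combination -hs) h30
  refine ⟨?_, hiso⟩
  obtain ⟨e⟩ := hiso
  have : NeZero (Nat.card G : F) := ⟨by
    have : Nat.card G = 30 := by
      simp [G, DihedralGroup.card]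
    rw [this]
    exact_mod_cast h30⟩
  infer_instance
end

section
/- Let F be a finite field of characteristic p > 5 with |F| = q ≡ −1 or 11 (mod 30), and G = C_3 × D_10. Then FG ≅ F² ⊕ F₂² ⊕ M₂(F)² ⊕ M₂(F₂)² as F-algebras, where F₂ is the quadratic extension of F; consequently U(FG) ≅ C_{q−1}² × C_{q²−1}² × GL(2,F)² × GL(2,F₂)². -/
open DihedralGroup

namespace Stmt17

/-- Homomorphism out of the dihedral group of order 10 from its presentation. -/
def repD {A : Type} [Monoid A] (R S : A) (h5 : R ^ 5 = 1) (hS : S * S = 1)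
    (hRS : R * S * R = S) : DihedralGroup 5 →* A where
  toFun d := match d with
    | r i => R ^ i.val
    | sr i => S * R ^ i.val
  map_one' := by
    show R ^ (0 : ZMod 5).val = 1
    simp
  map_mul' := by
    have hadd : ∀ i j : ZMod 5, R ^ (i + j).val = R ^ i.val * R ^ j.val := by
      intro i j
      rw [ZMod.val_add, ← pow_add]
      exact (pow_eq_pow_mod _ h5).symm
    have hc : ∀ n : ℕ, R ^ n * S * R ^ n = S := by
      intro n
      induction n with
      | zero => simp
      | succ n ih =>
        calc R ^ (n+1) * S * R ^ (n+1) = R ^ n * (R * S * R) * R ^ n := by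
              rw [pow_succ R n]; nth_rewrite 2 [← pow_succ]; rw [pow_succ']; simp only [mul_assoc]
          _ = S := by rw [hRS, ih]
    have hsub : ∀ i j : ZMod 5, R ^ i.val * (S * R ^ j.val) = S * R ^ (j - i).val := by
      intro i j
      have : R ^ j.val = R ^ i.val * R ^ (j - i).val := by rw [← hadd]; congr 2; ring
      rw [this, ← mul_assoc, ← mul_assoc, hc]
    rintro (i | i) (j | j)
    · exact hadd i j
    · exact (hsub i j).symm
    · show S * R ^ (i + j).val = S * R ^ i.val * R ^ j.val
      rw [hadd, mul_assoc]
    · show R ^ (j - i).val = S * R ^ i.val * (S * R ^ j.val)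
      rw [mul_assoc, hsub, ← mul_assoc, hS, one_mul]

/-- Character of the cyclic group of order 3. -/
def chi {L : Type} [CommMonoid L] (w : L) (h : w ^ 3 = 1) : Multiplicative (ZMod 3) →* L where
  toFun c := w ^ (Multiplicative.toAdd c).val
  map_one' := by simp
  map_mul' := by
    intro a b
    rw [toAdd_mul, ZMod.val_add, ← pow_add]
    exact (pow_eq_pow_mod _ h).symm

/-- Twisting a representation by a character. -/
def tw {L A C D : Type} [CommSemiring L] [Semiring A] [Algebra L A] [Monoid C] [Monoid D]
    (x : C →* L) (ρ : D →* A) : C × D →* A where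
  toFun g := x g.1 • ρ g.2
  map_one' := by simp
  map_mul' := by
    intro a b
    simp only [Prod.fst_mul, Prod.snd_mul, map_mul, smul_mul_smul_comm]

lemma sum_dihedral {M : Type} [AddCommMonoid M] (f : DihedralGroup 5 → M) :
    ∑ d, f d = ∑ i : ZMod 5, f (r i) + ∑ i : ZMod 5, f (sr i) := by
  let e : ZMod 5 ⊕ ZMod 5 ≃ DihedralGroup 5 :=
    { toFun := fun x => Sum.elim r sr x
      invFun := fun d => match d with
        | r i => Sum.inl i
        | sr i => Sum.inr i
      left_inv := by rintro (i | i) <;> rfl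
      right_inv := by rintro (i | i) <;> rfl }
  rw [← e.sum_comp, Fintype.sum_sum_type]
  rfl

section
variable {L : Type} [Field L]

/-- Rotation matrix. -/
def Rm (t : L) : Matrix (Fin 2) (Fin 2) L := !![0, -1; 1, t]
/-- Reflection matrix. -/
def Sm (L : Type) [Field L] : Matrix (Fin 2) (Fin 2) L := !![0, 1; 1, 0]

lemma Rm2 (t : L) (ht : t ^ 2 + t - 1 = 0) : Rm t ^ 2 = !![-1, -t; t, -t] := by
  have h : t * t = 1 - t := by linear_combination ht
  rw [pow_two, Rm, Matrix.mul_fin_two]; simp [h]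
  all_goals try ring
lemma Rm3 (t : L) (ht : t ^ 2 + t - 1 = 0) : Rm t ^ 3 = !![-t, t; -t, -1] := by
  have h : t * t = 1 - t := by linear_combination ht
  rw [pow_succ, Rm2 t ht, Rm, Matrix.mul_fin_two]; simp [h]
  all_goals try ring
lemma Rm4 (t : L) (ht : t ^ 2 + t - 1 = 0) : Rm t ^ 4 = !![t, 1; -1, 0] := by
  have h : t * t = 1 - t := by linear_combination ht
  rw [pow_succ, Rm3 t ht, Rm, Matrix.mul_fin_two]; simp [h]
  all_goals try ring
lemma Rm5 (t : L) (ht : t ^ 2 + t - 1 = 0) : Rm t ^ 5 = 1 := by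
  rw [pow_succ, Rm4 t ht, Rm, Matrix.mul_fin_two, Matrix.one_fin_two]; simp

/-- The two-dimensional representation. -/
def rho (t : L) (ht : t ^ 2 + t - 1 = 0) : DihedralGroup 5 →* Matrix (Fin 2) (Fin 2) L :=
  repD (Rm t) (Sm L) (Rm5 t ht)
    (by rw [Sm, Matrix.mul_fin_two, Matrix.one_fin_two]; simp)
    (by rw [Sm, Rm, Matrix.mul_fin_two, Matrix.mul_fin_two]; simp)

/-- The one-dimensional representations. -/
def eps (e : L) (h : e * e = 1) : DihedralGroup 5 →* L :=
  repD 1 e (by simp) h (by simp)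

lemma eps_sum (e : L) (h : e * e = 1) (c : DihedralGroup 5 → L) :
    ∑ d, c d * eps e h d = (∑ i : ZMod 5, c (r i)) + e * ∑ i : ZMod 5, c (sr i) := by
  rw [sum_dihedral, Finset.mul_sum]
  congr 1 <;> refine Finset.sum_congr rfl fun i _ => ?_
  · show c (r i) * 1 ^ _ = _
    simp
  · show c (sr i) * (e * 1 ^ _) = _
    simp [mul_comm]

lemma sum5 {M : Type} [AddCommMonoid M] (f : ZMod 5 → M) :
    ∑ i, f i = f 0 + f 1 + f 2 + f 3 + f 4 := Fin.sum_univ_five f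

lemma rho_sum (t : L) (ht : t ^ 2 + t - 1 = 0) (h2 : (2 : L) ≠ 0) (h5 : (5 : L) ≠ 0)
    (c : DihedralGroup 5 → L)
    (h : ∑ d, c d • rho t ht d = 0) :
    (c (r 0) - c (r 2) - t * c (r 3) + t * c (r 4) = 0 ∧
     c (r 1) + t * c (r 2) - t * c (r 3) - c (r 4) = 0) ∧
    (c (sr 0) - c (sr 2) - t * c (sr 3) + t * c (sr 4) = 0 ∧
     c (sr 1) + t * c (sr 2) - t * c (sr 3) - c (sr 4) = 0) := by
  rw [sum_dihedral, sum5, sum5] at h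
  have e0 : rho t ht (r 0) = !![1, 0; 0, 1] := by
    show Rm t ^ 0 = _
    rw [pow_zero, Matrix.one_fin_two]
  have e1 : rho t ht (r 1) = !![0, -1; 1, t] := pow_one (Rm t)
  have e2 : rho t ht (r 2) = _ := Rm2 t ht
  have e3 : rho t ht (r 3) = _ := Rm3 t ht
  have e4 : rho t ht (r 4) = _ := Rm4 t ht
  have f : ∀ i, rho t ht (sr i) = !![0, 1; 1, 0] * rho t ht (r i) := fun i => rfl
  simp only [f, e0, e1, e2, e3, e4, Matrix.mul_fin_two, Matrix.smul_of, Matrix.smul_cons,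
    Matrix.smul_empty, smul_eq_mul] at h
  have h00 := congrFun (congrFun h 0) 0
  have h01 := congrFun (congrFun h 0) 1
  have h10 := congrFun (congrFun h 1) 0
  have h11 := congrFun (congrFun h 1) 1
  simp [-r_zero] at h00 h01 h10 h11
  generalize c (r 0) = a0 at *
  generalize c (r 1) = a1 at *
  generalize c (r 2) = a2 at *
  generalize c (r 3) = a3 at *
  generalize c (r 4) = a4 at *
  generalize c (sr 0) = b0 at *
  generalize c (sr 1) = b1 at *
  generalize c (sr 2) = b2 at *
  generalize c (sr 3) = b3 at *
  generalize c (sr 4) = b4 at *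
  obtain ⟨α, hα⟩ : ∃ α, α = a0 - a2 - t * a3 + t * a4 := ⟨_, rfl⟩
  obtain ⟨β, hβ⟩ : ∃ β, β = a1 + t * a2 - t * a3 - a4 := ⟨_, rfl⟩
  obtain ⟨γ, hγ⟩ : ∃ γ, γ = b0 - b2 - t * b3 + t * b4 := ⟨_, rfl⟩
  obtain ⟨δ, hδ⟩ : ∃ δ, δ = b1 + t * b2 - t * b3 - b4 := ⟨_, rfl⟩
  rw [← hα, ← hβ, ← hγ, ← hδ]
  have k00 : α + δ = 0 := by rw [hα, hδ]; linear_combination h00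
  have k10 : β + γ = 0 := by rw [hβ, hγ]; linear_combination h10
  have k01 : -β + γ + t * δ = 0 := by
    rw [hβ, hγ, hδ]; linear_combination h01 + (b2 - b3) * ht
  have k11 : α + t * β - δ = 0 := by
    rw [hα, hβ, hδ]; linear_combination h11 + (a2 - a3) * ht
  have hn : (3 + t) * (2 - t) = 5 := by linear_combination -ht
  have hu : (3 + t : L) ≠ 0 := fun hz => h5 (by rw [← hn, hz, zero_mul])
  have hα0 : α = 0 := by
    refine ((mul_eq_zero (a := (3 + t : L))).mp ?_).resolve_left hu
    linear_combination 2 * k11 + 2 * k00 + t * k01 - t * k10 - t ^ 2 * k00 + α * ht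
  have hδ0 : δ = 0 := by linear_combination k00 - hα0
  have hβ0 : β = 0 := by
    refine ((mul_eq_zero (a := (2 : L))).mp ?_).resolve_left h2
    linear_combination k10 - k01 + t * hδ0
  exact ⟨⟨hα0, hβ0⟩, by linear_combination k10 - hβ0, hδ0⟩

lemma five_zero (t t' : L) (htt : t - t' ≠ 0) (h5 : (5 : L) ≠ 0) (a : ZMod 5 → L)
    (hs : ∑ i, a i = 0)
    (h1 : a 0 - a 2 - t * a 3 + t * a 4 = 0) (h2 : a 1 + t * a 2 - t * a 3 - a 4 = 0)
    (h1' : a 0 - a 2 - t' * a 3 + t' * a 4 = 0) (h2' : a 1 + t' * a 2 - t' * a 3 - a 4 = 0) :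
    ∀ i, a i = 0 := by
  rw [sum5] at hs
  have e1 : a 4 - a 3 = 0 := by
    refine ((mul_eq_zero (a := t - t')).mp ?_).resolve_left htt
    linear_combination h1 - h1'
  have e2 : a 2 - a 3 = 0 := by
    refine ((mul_eq_zero (a := t - t')).mp ?_).resolve_left htt
    linear_combination h2 - h2'
  have z : a 3 = 0 := by
    refine ((mul_eq_zero (a := (5 : L))).mp ?_).resolve_left h5
    linear_combination hs - h1 - h2 + t * e1 + t * e2 - 2 * e1 - 2 * e2
  intro i
  have z4 : a 4 = 0 := by linear_combination e1 + z
  have z2 : a 2 = 0 := by linear_combination e2 + z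
  have z0 : a 0 = 0 := by linear_combination h1 + z2 + t * z - t * z4
  have z1 : a 1 = 0 := by linear_combination h2 + z4 + t * z - t * z2
  fin_cases i
  · exact z0
  · exact z1
  · exact z2
  · exact z
  · exact z4

lemma dihedral_inj (t t' : L) (ht : t ^ 2 + t - 1 = 0) (ht' : t' ^ 2 + t' - 1 = 0)
    (htt : t - t' ≠ 0) (h2 : (2 : L) ≠ 0) (h5 : (5 : L) ≠ 0) (c : DihedralGroup 5 → L)
    (ha : ∑ d, c d * eps 1 (by simp) d = 0) (hb : ∑ d, c d * eps (-1) (by simp) d = 0)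
    (hr : ∑ d, c d • rho t ht d = 0) (hr' : ∑ d, c d • rho t' ht' d = 0) : ∀ d, c d = 0 := by
  rw [eps_sum] at ha hb
  obtain ⟨⟨p1, p2⟩, p3, p4⟩ := rho_sum t ht h2 h5 c hr
  obtain ⟨⟨q1, q2⟩, q3, q4⟩ := rho_sum t' ht' h2 h5 c hr'
  have s1 : ∑ i : ZMod 5, c (r i) = 0 := by
    refine ((mul_eq_zero (a := (2 : L))).mp ?_).resolve_left h2
    linear_combination ha + hb
  have s2 : ∑ i : ZMod 5, c (sr i) = 0 := by linear_combination ha - s1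
  rintro (i | i)
  · exact five_zero t t' htt h5 (fun i => c (r i)) s1 p1 p2 q1 q2 i
  · exact five_zero t t' htt h5 (fun i => c (sr i)) s2 p3 p4 q3 q4 i
end

lemma sum3 {M : Type} [AddCommMonoid M] (f : Multiplicative (ZMod 3) → M) :
    ∑ i, f i = f (.ofAdd 0) + f (.ofAdd 1) + f (.ofAdd 2) := Fin.sum_univ_three f

lemma lift_tw {F L A : Type} [Field F] [Field L] [Algebra F L] [Ring A] [Algebra F A]
    [Algebra L A] [IsScalarTower F L A] (x : Multiplicative (ZMod 3) →* L)
    (ρ : DihedralGroup 5 →* A) (f : MonoidAlgebra F (Multiplicative (ZMod 3) × DihedralGroup 5)) :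
    MonoidAlgebra.lift F A _ (tw x ρ) f =
      ∑ d, (∑ i, algebraMap F L (f.coeff (i, d)) * x i) • ρ d := by
  rw [MonoidAlgebra.lift_apply, Finsupp.sum_fintype _ _ (by simp), Fintype.sum_prod_type_right]
  refine Finset.sum_congr rfl fun d _ => ?_
  rw [Finset.sum_smul]
  refine Finset.sum_congr rfl fun i _ => ?_
  show _ • (x i • ρ d) = _
  rw [← Algebra.smul_def, smul_assoc]

lemma exists_w (F : Type) [Field F] [Fintype F]
    (hq : Fintype.card F % 30 = 29 ∨ Fintype.card F % 30 = 11)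
    (K : Type) [Field K] [Fintype K] (hK : Fintype.card K = Fintype.card F ^ 2) [Algebra F K] :
    ∃ w : K, w ^ 3 = 1 ∧ ∀ a : F, algebraMap F K a ≠ w := by
  classical
  have hd : 3 ∣ Fintype.card Kˣ := by
    rw [Fintype.card_units, hK]
    have : Fintype.card F ^ 2 % 3 = 1 := by
      rw [Nat.pow_mod]
      have : Fintype.card F % 3 = 2 := by omega
      rw [this]
    omega
  have : Fact (Nat.Prime 3) := ⟨by norm_num⟩
  obtain ⟨u, hu⟩ := exists_prime_orderOf_dvd_card 3 hd
  have hu3 : u ^ 3 = 1 := by rw [← hu]; exact pow_orderOf_eq_one u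
  have hw3 : (u : K) ^ 3 = 1 := by rw [← Units.val_pow_eq_pow_val, hu3, Units.val_one]
  refine ⟨u, hw3, fun a ha => ?_⟩
  have ha3 : a ^ 3 = 1 := by
    apply (algebraMap F K).injective
    rw [map_pow, ha, hw3, map_one]
  have hane : a ≠ 0 := by rintro rfl; simp at ha3
  have hq1 : a ^ (Fintype.card F - 1) = 1 := FiniteField.pow_card_sub_one_eq_one a hane
  have ho : orderOf a ∣ Nat.gcd 3 (Fintype.card F - 1) :=
    Nat.dvd_gcd (orderOf_dvd_of_pow_eq_one ha3) (orderOf_dvd_of_pow_eq_one hq1)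
  have hg : Nat.gcd 3 (Fintype.card F - 1) = 1 := by
    rw [Nat.gcd_rec]
    have : (Fintype.card F - 1) % 3 = 1 := by omega
    rw [this]; rfl
  rw [hg, Nat.dvd_one, orderOf_eq_one_iff] at ho
  rw [ho, map_one] at ha
  have : u = 1 := Units.ext ha.symm
  rw [this, orderOf_one] at hu
  omega

lemma exists_t (F : Type) [Field F] [Fintype F] (h2 : (2 : F) ≠ 0) (h5 : (5 : F) ≠ 0)
    (hq : Fintype.card F % 30 = 29 ∨ Fintype.card F % 30 = 11) :
    ∃ t t' : F, t ^ 2 + t - 1 = 0 ∧ t' ^ 2 + t' - 1 = 0 ∧ t - t' ≠ 0 := by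
  have : Fact (Nat.Prime 5) := ⟨by norm_num⟩
  have hs : IsSquare ((5 : ℕ) : F) := by
    rw [FiniteField.isSquare_odd_prime_iff (fun h => h2 (by
      have := ringChar.spec F 2
      rw [h] at this
      exact_mod_cast this.mpr dvd_rfl)) (by norm_num)]
    have hc : ((Fintype.card F : ℕ) : ZMod 5) = 1 ∨ ((Fintype.card F : ℕ) : ZMod 5) = -1 := by
      rcases hq with h | h
      · right
        rw [← ZMod.natCast_mod, show Fintype.card F % 5 = 4 by omega]; rfl
      · left
        rw [← ZMod.natCast_mod, show Fintype.card F % 5 = 1 by omega]; rfl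
    have hx : ∀ x : ZMod 4, ZMod.χ₄ x = 0 ∨ ZMod.χ₄ x = 1 ∨ ZMod.χ₄ x = -1 := by decide
    rcases hc with hc | hc <;> rcases hx (Fintype.card F : ZMod 4) with h | h | h <;>
      rw [hc, h, Ne, quadraticChar_neg_one_iff_not_isSquare, not_not]
    · exact ⟨0, by push_cast; first | rfl | (simp; try rfl)⟩
    · exact ⟨1, by push_cast; first | rfl | (simp; try rfl)⟩
    · exact ⟨2, by push_cast; first | rfl | (simp; try rfl)⟩
    · exact ⟨0, by push_cast; first | rfl | (simp; try rfl)⟩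
    · exact ⟨2, by push_cast; first | rfl | (simp; try rfl)⟩
    · exact ⟨1, by push_cast; first | rfl | (simp; try rfl)⟩
  obtain ⟨s, hs⟩ := hs
  push_cast at hs
  have hs0 : s ≠ 0 := by rintro rfl; exact h5 (by simpa using hs)
  refine ⟨(-1 + s) / 2, (-1 - s) / 2, ?_, ?_, ?_⟩
  · field_simp
    linear_combination -hs
  · field_simp
    linear_combination -hs
  · have : (-1 + s) / 2 - (-1 - s) / 2 = s := by field_simp; ring
    rwa [this]

theorem algIso (F : Type) [Field F] [Fintype F] (h2 : (2 : F) ≠ 0) (h3 : (3 : F) ≠ 0)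
    (h5 : (5 : F) ≠ 0)
    (hq : Fintype.card F % 30 = 29 ∨ Fintype.card F % 30 = 11)
    (K : Type) [Field K] [Fintype K] [Algebra F K] (hK : Module.finrank F K = 2)
    (hcard : Fintype.card K = Fintype.card F ^ 2) :
    Nonempty (MonoidAlgebra F (Multiplicative (ZMod 3) × DihedralGroup 5) ≃ₐ[F]
      ((Fin 2 → F) × (Fin 2 → K) × (Fin 2 → Matrix (Fin 2) (Fin 2) F)
        × (Fin 2 → Matrix (Fin 2) (Fin 2) K))) := by
  obtain ⟨t, t', ht, ht', htt⟩ := exists_t F h2 h5 hq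
  obtain ⟨w, hw, hwF⟩ := exists_w F hq K hcard
  have hinj := (algebraMap F K).injective
  let u := algebraMap F K t
  let u' := algebraMap F K t'
  have hu : u ^ 2 + u - 1 = 0 := by simpa using congrArg (algebraMap F K) ht
  have hu' : u' ^ 2 + u' - 1 = 0 := by simpa using congrArg (algebraMap F K) ht'
  have huu : u - u' ≠ 0 := by
    show algebraMap F K t - algebraMap F K t' ≠ 0
    rw [← map_sub]; exact (map_ne_zero _).mpr htt
  have k2 : (2 : K) ≠ 0 := by
    have := (map_ne_zero (algebraMap F K)).mpr h2
    rwa [map_ofNat] at this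
  have k5 : (5 : K) ≠ 0 := by
    have := (map_ne_zero (algebraMap F K)).mpr h5
    rwa [map_ofNat] at this
  let G := Multiplicative (ZMod 3) × DihedralGroup 5
  let x0 : Multiplicative (ZMod 3) →* F := chi 1 (by simp)
  let x1 : Multiplicative (ZMod 3) →* K := chi w hw
  let a1 := MonoidAlgebra.lift F F G (tw x0 (eps (1 : F) (by simp)))
  let a2 := MonoidAlgebra.lift F F G (tw x0 (eps (-1 : F) (by simp)))
  let b1 := MonoidAlgebra.lift F K G (tw x1 (eps (1 : K) (by simp)))
  let b2 := MonoidAlgebra.lift F K G (tw x1 (eps (-1 : K) (by simp)))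
  let c1 := MonoidAlgebra.lift F _ G (tw x0 (rho t ht))
  let c2 := MonoidAlgebra.lift F _ G (tw x0 (rho t' ht'))
  let d1 := MonoidAlgebra.lift F _ G (tw x1 (rho u hu))
  let d2 := MonoidAlgebra.lift F _ G (tw x1 (rho u' hu'))
  let Φ : MonoidAlgebra F G →ₐ[F] ((Fin 2 → F) × (Fin 2 → K) × (Fin 2 → Matrix (Fin 2) (Fin 2) F)
        × (Fin 2 → Matrix (Fin 2) (Fin 2) K)) :=
    (AlgHom.pi ![a1, a2]).prod ((AlgHom.pi ![b1, b2]).prod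
      ((AlgHom.pi ![c1, c2]).prod (AlgHom.pi ![d1, d2])))
  have hΦ : Function.Injective Φ := by
    rw [injective_iff_map_eq_zero]
    intro f hf
    have A1 : a1 f = 0 := congrFun (congrArg (fun z => z.1) hf) 0
    have A2 : a2 f = 0 := congrFun (congrArg (fun z => z.1) hf) 1
    have B1 : b1 f = 0 := congrFun (congrArg (fun z => z.2.1) hf) 0
    have B2 : b2 f = 0 := congrFun (congrArg (fun z => z.2.1) hf) 1
    have C1 : c1 f = 0 := congrFun (congrArg (fun z => z.2.2.1) hf) 0
    have C2 : c2 f = 0 := congrFun (congrArg (fun z => z.2.2.1) hf) 1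
    have D1 : d1 f = 0 := congrFun (congrArg (fun z => z.2.2.2) hf) 0
    have D2 : d2 f = 0 := congrFun (congrArg (fun z => z.2.2.2) hf) 1
    have E0 := dihedral_inj t t' ht ht' htt h2 h5 _ ((lift_tw x0 _ f).symm.trans A1)
      ((lift_tw x0 _ f).symm.trans A2) ((lift_tw x0 _ f).symm.trans C1)
      ((lift_tw x0 _ f).symm.trans C2)
    have E1 := dihedral_inj u u' hu hu' huu k2 k5 _ ((lift_tw x1 _ f).symm.trans B1)
      ((lift_tw x1 _ f).symm.trans B2) ((lift_tw x1 _ f).symm.trans D1)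
      ((lift_tw x1 _ f).symm.trans D2)
    have key : ∀ d, f.coeff (.ofAdd 0, d) = 0 ∧ f.coeff (.ofAdd 1, d) = 0 ∧
        f.coeff (.ofAdd 2, d) = 0 := by
      intro d
      have e0 := E0 d
      have e1 := E1 d
      rw [sum3] at e0 e1
      have y0 : ∀ i, x0 i = 1 := fun i => one_pow _
      have z0 : x1 (.ofAdd 0) = 1 := pow_zero w
      have z1 : x1 (.ofAdd 1) = w := pow_one w
      have z2 : x1 (.ofAdd 2) = w ^ 2 := rfl
      rw [y0, y0, y0] at e0
      rw [z0, z1, z2] at e1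
      simp only [Algebra.algebraMap_self, RingHom.id_apply, mul_one] at e0 e1
      generalize f.coeff (.ofAdd 0, d) = p0 at *
      generalize f.coeff (.ofAdd 1, d) = p1 at *
      generalize f.coeff (.ofAdd 2, d) = p2 at *
      have hw1 : w - 1 ≠ 0 := fun h => hwF 1 (by rw [map_one]; linear_combination -h)
      have hww : w ^ 2 + w + 1 = 0 := by
        refine ((mul_eq_zero (a := w - 1)).mp ?_).resolve_left hw1
        linear_combination hw
      have hlin : algebraMap F K (p0 - p2) + algebraMap F K (p1 - p2) * w = 0 := by
        rw [map_sub, map_sub]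
        linear_combination e1 - algebraMap F K p2 * hww
      have h12 : p1 - p2 = 0 := by
        by_contra hne
        apply hwF (-(p0 - p2) / (p1 - p2))
        have hne' : algebraMap F K (p1 - p2) ≠ 0 := (map_ne_zero _).mpr hne
        rw [map_div₀, map_neg, div_eq_iff hne']
        linear_combination -hlin
      have h02 : p0 - p2 = 0 := by
        apply hinj
        rw [h12, map_zero, zero_mul, add_zero] at hlin
        rw [hlin, map_zero]
      have q2 : p2 = 0 := by
        refine ((mul_eq_zero (a := (3 : F))).mp ?_).resolve_left h3
        linear_combination e0 - h12 - h02
      exact ⟨by linear_combination h02 + q2, by linear_combination h12 + q2, q2⟩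
    ext ⟨i, d⟩
    obtain ⟨g0, g1, g2⟩ := key d
    induction i using Multiplicative.rec with
    | ofAdd i =>
    fin_cases i
    · exact g0
    · exact g1
    · exact g2
  have : FiniteDimensional F K := Module.finite_of_finrank_pos (by omega)
  have : FiniteDimensional F (MonoidAlgebra F G) :=
    Module.Finite.of_basis (MonoidAlgebra.basis G F)
  have hdim : Module.finrank F (MonoidAlgebra F G) = Module.finrank F
      ((Fin 2 → F) × (Fin 2 → K) × (Fin 2 → Matrix (Fin 2) (Fin 2) F)
        × (Fin 2 → Matrix (Fin 2) (Fin 2) K)) := by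
    rw [Module.finrank_eq_card_basis (MonoidAlgebra.basis G F)]
    simp [G, Module.finrank_prod, Module.finrank_pi_fintype, Module.finrank_matrix, hK,
      DihedralGroup.card]
  have hsurj : Function.Surjective Φ :=
    (LinearMap.injective_iff_surjective_of_finrank_eq_finrank (f := Φ.toLinearMap) hdim).mp hΦ
  exact ⟨AlgEquiv.ofBijective Φ ⟨hΦ, hsurj⟩⟩

lemma unitsEquiv (L : Type) [Field L] [Fintype L] (n : ℕ) (h : Fintype.card L = n) :
    Nonempty (Lˣ ≃* Multiplicative (ZMod (n - 1))) := by
  classical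
  refine ⟨mulEquivOfCyclicCardEq ?_⟩
  subst h
  rw [Nat.card_eq_fintype_card, Fintype.card_units, Nat.card_congr Multiplicative.toAdd,
    Nat.card_zmod]

end Stmt17

/-- For `F` a finite field of characteristic `p > 5` with `q ≡ 29, 11 (mod 30)`,
`F₂` the quadratic extension of `F`, and `G = C₃ × D₁₀`:
`FG ≅ F² ⊕ F₂² ⊕ M₂(F)² ⊕ M₂(F₂)²` as `F`-algebras, and consequently
`U(FG) ≅ C_{q-1}² × C_{q²-1}² × GL(2,F)² × GL(2,F₂)²`. -/
theorem stmt_17 (F : Type) [Field F] [Fintype F] (p : ℕ) (hchar : CharP F p) (hp : 5 < p)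
    (hq : Fintype.card F % 30 = 29 ∨ Fintype.card F % 30 = 11)
    (K : Type) [Field K] [Algebra F K] (hK : Module.finrank F K = 2) :
    let G := Multiplicative (ZMod 3) × DihedralGroup 5
    let q := Fintype.card F
    Nonempty (MonoidAlgebra F G ≃ₐ[F]
      ((Fin 2 → F) × (Fin 2 → K) × (Fin 2 → Matrix (Fin 2) (Fin 2) F)
        × (Fin 2 → Matrix (Fin 2) (Fin 2) K))) ∧
    Nonempty ((MonoidAlgebra F G)ˣ ≃*
      ((Fin 2 → Multiplicative (ZMod (q - 1))) × (Fin 2 → Multiplicative (ZMod (q ^ 2 - 1)))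
        × (Fin 2 → GL (Fin 2) F) × (Fin 2 → GL (Fin 2) K))) := by
  intro G q
  classical
  have : FiniteDimensional F K := Module.finite_of_finrank_pos (by omega)
  have : Finite K := Module.finite_of_finite F
  have : Fintype K := Fintype.ofFinite K
  have hcard : Fintype.card K = Fintype.card F ^ 2 := by
    rw [← hK]; exact Module.card_eq_pow_finrank
  have hne : ∀ n : ℕ, 0 < n → n < p → (n : F) ≠ 0 := fun n h0 hn h =>
    absurd (Nat.le_of_dvd h0 ((CharP.cast_eq_zero_iff F p n).mp h)) (by omega)
  have h2 : (2 : F) ≠ 0 := by exact_mod_cast hne 2 (by norm_num) (by omega)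
  have h3 : (3 : F) ≠ 0 := by exact_mod_cast hne 3 (by norm_num) (by omega)
  have h5 : (5 : F) ≠ 0 := by exact_mod_cast hne 5 (by norm_num) (by omega)
  obtain ⟨e⟩ := Stmt17.algIso F h2 h3 h5 hq K hK hcard
  obtain ⟨eF⟩ := Stmt17.unitsEquiv F q rfl
  obtain ⟨eK⟩ := Stmt17.unitsEquiv K (q ^ 2) hcard
  refine ⟨⟨e⟩, ⟨(Units.mapEquiv e.toMulEquiv).trans (MulEquiv.prodUnits.trans
    (MulEquiv.prodCongr (MulEquiv.piUnits.trans (MulEquiv.piCongrRight fun _ => eF))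
      (MulEquiv.prodUnits.trans (MulEquiv.prodCongr
        (MulEquiv.piUnits.trans (MulEquiv.piCongrRight fun _ => eK))
        (MulEquiv.prodUnits.trans (MulEquiv.prodCongr MulEquiv.piUnits MulEquiv.piUnits))))))⟩⟩
end

section
/- Let F be a finite field of characteristic p > 5 with |F| = q ≡ 7 or 13 (mod 30), and G = C_3 × D_10. Then FG ≅ F⁶ ⊕ M₂(F₂)³, where F₂ is the quadratic extension of F; consequently U(FG) ≅ C_{q−1}⁶ × GL(2, F₂)³. -/
open Matrix in
/-- the rotation matrix with trace `a` and determinant one -/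
def rotM {K : Type} [Field K] (a : K) : Matrix (Fin 2) (Fin 2) K := !![0, -1; 1, a]

/-- the reflection -/
def refM (K : Type) [Field K] : Matrix (Fin 2) (Fin 2) K := !![0, 1; 1, 0]

theorem rotM_sq {K : Type} [Field K] (a : K) (ha : a ^ 2 = 1 - a) :
    rotM a ^ 2 = !![-1, -a; a, -a] := by
  rw [pow_two]
  ext i j
  fin_cases i <;> fin_cases j <;> simp [rotM, Matrix.mul_apply, Fin.sum_univ_two]
  linear_combination ha

theorem rotM_cube {K : Type} [Field K] (a : K) (ha : a ^ 2 = 1 - a) :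
    rotM a ^ 3 = !![-a, a; -a, -1] := by
  rw [pow_succ, rotM_sq a ha]
  ext i j
  fin_cases i <;> fin_cases j <;> simp [rotM, Matrix.mul_apply, Fin.sum_univ_two]
  all_goals first | linear_combination ha | linear_combination -ha

theorem rotM_four {K : Type} [Field K] (a : K) (ha : a ^ 2 = 1 - a) :
    rotM a ^ 4 = !![a, 1; -1, 0] := by
  rw [pow_succ, rotM_cube a ha]
  ext i j
  fin_cases i <;> fin_cases j <;> simp [rotM, Matrix.mul_apply, Fin.sum_univ_two]
  all_goals first | linear_combination ha | linear_combination -ha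

theorem rotM_five {K : Type} [Field K] (a : K) (ha : a ^ 2 = 1 - a) :
    rotM a ^ 5 = 1 := by
  rw [pow_succ, rotM_four a ha]
  ext i j
  fin_cases i <;> fin_cases j <;> simp [rotM, Matrix.mul_apply, Fin.sum_univ_two]

theorem pow_val_add {M : Type} [Monoid M] {n : ℕ} [NeZero n] (R : M) (h : R ^ n = 1)
    (i j : ZMod n) : R ^ (i + j).val = R ^ i.val * R ^ j.val := by
  rw [← pow_add, ZMod.val_add, ← pow_eq_pow_mod _ h]

theorem pow_val_mul_ref {K : Type} [Field K] (a : K) (ha : a ^ 2 = 1 - a) (i : ZMod 5) :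
    rotM a ^ i.val * refM K = refM K * rotM a ^ (-i).val := by
  have h1 : rotM a * refM K = refM K * rotM a ^ 4 := by
    rw [rotM_four a ha]
    ext i j
    fin_cases i <;> fin_cases j <;> simp [rotM, refM, Matrix.mul_apply, Fin.sum_univ_two]
  have h2 : ∀ n : ℕ, rotM a ^ n * refM K = refM K * rotM a ^ (4 * n) := by
    intro n
    induction n with
    | zero => simp
    | succ n ih =>
      rw [pow_succ, mul_assoc, h1, ← mul_assoc, ih, mul_assoc, ← pow_add]
      congr 2
  rw [h2]
  congr 1
  rw [pow_eq_pow_mod (4 * i.val) (rotM_five a ha)]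
  congr 1
  revert i
  decide

/-- two-dimensional representation of the dihedral group -/
def rhoD {K : Type} [Field K] (a : K) (ha : a ^ 2 = 1 - a) :
    DihedralGroup 5 →* Matrix (Fin 2) (Fin 2) K where
  toFun d := match d with
    | .r i => rotM a ^ i.val
    | .sr i => refM K * rotM a ^ i.val
  map_one' := by
    change rotM a ^ (0 : ZMod 5).val = 1
    simp
  map_mul' := by
    have hS : refM K * refM K = 1 := by
      ext i j
      fin_cases i <;> fin_cases j <;> simp [refM, Matrix.mul_apply, Fin.sum_univ_two]
    have h5 := rotM_five a ha
    rintro (i | i) (j | j)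
    · simp only [DihedralGroup.r_mul_r]
      exact pow_val_add _ h5 _ _
    · simp only [DihedralGroup.r_mul_sr]
      rw [← mul_assoc, pow_val_mul_ref a ha, mul_assoc, ← pow_val_add _ h5, neg_add_eq_sub]
    · simp only [DihedralGroup.sr_mul_r]
      rw [mul_assoc, ← pow_val_add _ h5]
    · simp only [DihedralGroup.sr_mul_sr]
      rw [mul_assoc, ← mul_assoc (rotM a ^ _), pow_val_mul_ref a ha, mul_assoc,
        ← pow_val_add _ h5, ← mul_assoc, hS, one_mul, neg_add_eq_sub]

/-- sign character -/
def sgnD (F : Type) [Field F] : DihedralGroup 5 →* F where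
  toFun d := match d with
    | .r _ => 1
    | .sr _ => -1
  map_one' := rfl
  map_mul' := by
    rintro (i | i) (j | j) <;> simp

/-- characters of the cyclic group -/
def chiC {F : Type} [Field F] (w : F) (hw : w ^ 3 = 1) : Multiplicative (ZMod 3) →* F where
  toFun c := w ^ (Multiplicative.toAdd c).val
  map_one' := by simp
  map_mul' c d := by
    rw [toAdd_mul, pow_val_add w hw]

theorem sum_dihedral {A : Type} [AddCommMonoid A] (f : DihedralGroup 5 → A) :
    ∑ d, f d = (f (.r 0) + f (.r 1) + f (.r 2) + f (.r 3) + f (.r 4)) +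
      (f (.sr 0) + f (.sr 1) + f (.sr 2) + f (.sr 3) + f (.sr 4)) := by
  let e : ZMod 5 ⊕ ZMod 5 ≃ DihedralGroup 5 :=
    { toFun := fun s => s.elim .r .sr
      invFun := fun d => match d with
        | .r i => .inl i
        | .sr i => .inr i
      left_inv := by rintro (i | i) <;> rfl
      right_inv := by rintro (i | i) <;> rfl }
  rw [← e.sum_comp, Fintype.sum_sum_type]
  congr 1
  · exact Fin.sum_univ_five (fun i : Fin 5 => f (.r i))
  · exact Fin.sum_univ_five (fun i : Fin 5 => f (.sr i))

theorem dih_inj {F K : Type} [Field F] [Field K] [Algebra F K] (a : K) (ha : a ^ 2 = 1 - a)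
    (haF : ∀ x : F, algebraMap F K x ≠ a) (h2 : (2 : F) ≠ 0) (h5 : (5 : F) ≠ 0)
    (y : DihedralGroup 5 → F) (e1 : ∑ d, y d = 0) (e2 : ∑ d, y d * sgnD F d = 0)
    (e3 : ∑ d, y d • rhoD a ha d = 0) : y = 0 := by
  have key : ∀ u v : F, algebraMap F K u + algebraMap F K v * a = 0 → u = 0 ∧ v = 0 := by
    intro u v h
    have hv : v = 0 := by
      by_contra hv
      apply haF (-u / v)
      have : algebraMap F K v ≠ 0 := by simpa using hv
      rw [map_div₀, map_neg]
      field_simp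
      linear_combination -h
    subst hv
    simpa using h
  rw [sum_dihedral] at e1 e2 e3
  have r0 : rhoD a ha (.r 0) = 1 := by change rotM a ^ 0 = 1; simp
  have r1 : rhoD a ha (.r 1) = !![0, -1; 1, a] := by change rotM a ^ 1 = _; simp [rotM]
  have r2 : rhoD a ha (.r 2) = _ := rotM_sq a ha
  have r3 : rhoD a ha (.r 3) = _ := rotM_cube a ha
  have r4 : rhoD a ha (.r 4) = _ := rotM_four a ha
  have s0 : rhoD a ha (.sr 0) = refM K * 1 := by change refM K * rotM a ^ 0 = _; simp
  have s1 : rhoD a ha (.sr 1) = refM K * !![0, -1; 1, a] := by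
    change refM K * rotM a ^ 1 = _; simp [rotM]
  have s2 : rhoD a ha (.sr 2) = refM K * _ := congrArg (refM K * ·) (rotM_sq a ha)
  have s3 : rhoD a ha (.sr 3) = refM K * _ := congrArg (refM K * ·) (rotM_cube a ha)
  have s4 : rhoD a ha (.sr 4) = refM K * _ := congrArg (refM K * ·) (rotM_four a ha)
  rw [r0, r1, r2, r3, r4, s0, s1, s2, s3, s4] at e3
  have sgr : ∀ i, sgnD F (.r i) = 1 := fun _ => rfl
  have sgs : ∀ i, sgnD F (.sr i) = -1 := fun _ => rfl
  simp only [sgr, sgs] at e2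
  have m00 := congrFun (congrFun e3 0) 0
  have m01 := congrFun (congrFun e3 0) 1
  have m10 := congrFun (congrFun e3 1) 0
  have m11 := congrFun (congrFun e3 1) 1
  simp [refM, Matrix.mul_apply, Fin.sum_univ_two, -DihedralGroup.r_zero] at m00 m01 m10 m11
  simp only [Algebra.smul_def] at m00 m01 m10 m11
  have e2' : (y (.r 0) + y (.r 1) + y (.r 2) + y (.r 3) + y (.r 4)) -
      (y (.sr 0) + y (.sr 1) + y (.sr 2) + y (.sr 3) + y (.sr 4)) = 0 := by
    linear_combination e2
  obtain ⟨p0, q0⟩ := key (y (.r 0) - y (.r 2) + y (.sr 1) - y (.sr 4))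
    (-y (.r 3) + y (.r 4) + y (.sr 2) - y (.sr 3)) (by
      simp only [map_add, map_sub, map_neg]; linear_combination m00)
  obtain ⟨p1, q1⟩ := key (-y (.r 1) + y (.r 4) + y (.sr 0) - y (.sr 3))
    (-y (.r 2) + y (.r 3) + y (.sr 1) - y (.sr 2)) (by
      simp only [map_add, map_sub, map_neg]; linear_combination m01)
  obtain ⟨p2, q2⟩ := key (y (.r 1) - y (.r 4) + y (.sr 0) - y (.sr 2))
    (y (.r 2) - y (.r 3) - y (.sr 3) + y (.sr 4)) (by
      simp only [map_add, map_sub, map_neg]; linear_combination m10)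
  obtain ⟨p3, q3⟩ := key (y (.r 0) - y (.r 3) - y (.sr 1) + y (.sr 4))
    (y (.r 1) - y (.r 2) - y (.sr 2) + y (.sr 3)) (by
      simp only [map_add, map_sub, map_neg]; linear_combination m11)
  have t : ∀ u : F, 10 * u = 0 → u = 0 := by
    intro u hu
    have h10 : (10 : F) ≠ 0 := by
      have : (10 : F) = 2 * 5 := by norm_num
      rw [this]
      exact mul_ne_zero h2 h5
    exact (mul_eq_zero.mp hu).resolve_left h10
  have z0 : y (.r 0) = 0 := t _ (by linear_combination (1) * e1 + (1) * e2' + (4) * p0 + (-2) * q0 + (4) * p3 + (-2) * q3)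
  have z1 : y (.r 1) = 0 := t _ (by linear_combination (1) * e1 + (1) * e2' + (-2) * p0 + (6) * q0 + (-4) * p1 + (2) * q1 + (4) * p2 + (-2) * q2)
  have z2 : y (.r 2) = 0 := t _ (by linear_combination (1) * e1 + (1) * e2' + (2) * p0 + (-6) * q0 + (2) * p1 + (-6) * q1 + (-2) * p2 + (6) * q2 + (-4) * p3 + (2) * q3)
  have z3 : y (.r 3) = 0 := t _ (by linear_combination (1) * e1 + (1) * e2' + (-4) * p0 + (2) * q0 + (-2) * p1 + (6) * q1 + (2) * p2 + (-6) * q2 + (2) * p3 + (-6) * q3)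
  have z4 : y (.r 4) = 0 := t _ (by linear_combination (1) * e1 + (1) * e2' + (4) * p1 + (-2) * q1 + (-4) * p2 + (2) * q2 + (-2) * p3 + (6) * q3)
  have z5 : y (.sr 0) = 0 := t _ (by linear_combination (1) * e1 + (-1) * e2' + (4) * p1 + (-2) * q1 + (4) * p2 + (-2) * q2)
  have z6 : y (.sr 1) = 0 := t _ (by linear_combination (1) * e1 + (-1) * e2' + (4) * p0 + (-2) * q0 + (-2) * p2 + (6) * q2 + (-4) * p3 + (2) * q3)
  have z7 : y (.sr 2) = 0 := t _ (by linear_combination (1) * e1 + (-1) * e2' + (-2) * p0 + (6) * q0 + (-4) * p1 + (2) * q1 + (2) * p2 + (-6) * q2 + (2) * p3 + (-6) * q3)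
  have z8 : y (.sr 3) = 0 := t _ (by linear_combination (1) * e1 + (-1) * e2' + (2) * p0 + (-6) * q0 + (2) * p1 + (-6) * q1 + (-4) * p2 + (2) * q2 + (-2) * p3 + (6) * q3)
  have z9 : y (.sr 4) = 0 := t _ (by linear_combination (1) * e1 + (-1) * e2' + (-4) * p0 + (2) * q0 + (-2) * p1 + (6) * q1 + (4) * p3 + (-2) * q3)
  funext d
  rcases d with i | i
  · change y (.r i) = 0
    revert i
    intro (i : Fin 5)
    fin_cases i <;> assumption
  · change y (.sr i) = 0
    revert i
    intro (i : Fin 5)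
    fin_cases i <;> assumption

/-- the representations of `C₃ × D₁₀` -/
def tensHom {F A : Type} [Field F] [Ring A] [Algebra F A] (χ : Multiplicative (ZMod 3) →* F)
    (f : DihedralGroup 5 →* A) : Multiplicative (ZMod 3) × DihedralGroup 5 →* A where
  toFun g := χ g.1 • f g.2
  map_one' := by simp
  map_mul' g h := by simp only [Prod.fst_mul, Prod.snd_mul, map_mul, smul_mul_smul_comm]

theorem lift_tens {F A : Type} [Field F] [Ring A] [Algebra F A] (χ : Multiplicative (ZMod 3) →* F)
    (f : DihedralGroup 5 →* A) (x : MonoidAlgebra F (Multiplicative (ZMod 3) × DihedralGroup 5)) :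
    MonoidAlgebra.lift F A _ (tensHom χ f) x =
      ∑ d, (∑ c, χ c * x.coeff (c, d)) • f d := by
  rw [MonoidAlgebra.lift_apply, Finsupp.sum_fintype _ _ (by simp), Fintype.sum_prod_type_right]
  refine Finset.sum_congr rfl fun d _ => ?_
  rw [Finset.sum_smul]
  refine Finset.sum_congr rfl fun c _ => ?_
  simp [tensHom, smul_smul, mul_comm]

theorem exists_cube_root (F : Type) [Field F] [Fintype F] (h : Fintype.card F % 3 = 1) :
    ∃ w : F, w ^ 2 + w + 1 = 0 := by
  classical
  have hd : 3 ∣ Fintype.card Fˣ := by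
    rw [Fintype.card_units]
    omega
  obtain ⟨u, hu⟩ := exists_prime_orderOf_dvd_card 3 hd
  have h3 : (u : F) ^ 3 = 1 := by
    rw [← Units.val_pow_eq_pow_val, ← hu, pow_orderOf_eq_one, Units.val_one]
  have h1 : (u : F) ≠ 1 := by
    intro h
    have : u = 1 := Units.ext h
    rw [this, orderOf_one] at hu
    omega
  refine ⟨u, ?_⟩
  have : ((u : F) - 1) * ((u : F) ^ 2 + u + 1) = 0 := by linear_combination h3
  exact (mul_eq_zero.mp this).resolve_left (sub_ne_zero.mpr h1)

theorem no_golden (F : Type) [Field F] [Fintype F]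
    (h : Fintype.card F % 5 = 2 ∨ Fintype.card F % 5 = 3) (a : F) : a ^ 2 ≠ 1 - a := by
  intro ha
  have h5 := rotM_five a ha
  let u : GL (Fin 2) F := Units.ofPowEqOne (rotM a) 5 h5 (by norm_num)
  have hu5 : u ^ 5 = 1 := by
    ext1
    simpa [u] using h5
  have hc := Matrix.card_GL_field (𝔽 := F) 2
  have hN : u ^ Nat.card (GL (Fin 2) F) = 1 := pow_card_eq_one'
  have hcop : Nat.Coprime 5 (Nat.card (GL (Fin 2) F)) := by
    rw [hc, Fin.prod_univ_two, Nat.Prime.coprime_iff_not_dvd (by norm_num)]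
    intro hd
    have hq : 1 ≤ Fintype.card F := Fintype.card_pos
    generalize Fintype.card F = q at *
    simp only [Fin.val_zero, Fin.val_one, pow_zero, pow_one] at hd
    have h2 : q ^ 2 % 5 = 4 := by
      rcases h with h | h <;> simp [Nat.pow_mod, h]
    have hle : q ≤ q ^ 2 := Nat.le_self_pow (by norm_num) q
    rcases (Nat.Prime.dvd_mul (by norm_num)).mp hd with h' | h' <;> omega
  have h1 : u = 1 := by
    have := (pow_gcd_eq_one (a := u)).mpr ⟨hu5, hN⟩
    rwa [hcop, pow_one] at this
  have h2 : rotM a = 1 := congrArg Units.val h1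
  have h3 := congrFun (congrFun h2 0) 0
  simp [rotM] at h3

theorem exists_golden (F K : Type) [Field F] [Fintype F] [Field K] [Algebra F K]
    (hK : Module.finrank F K = 2) (h2 : (2 : F) ≠ 0) (h5 : (5 : F) ≠ 0) :
    ∃ a : K, a ^ 2 = 1 - a := by
  classical
  haveI : Module.Finite F K := Module.finite_of_finrank_pos (by omega)
  haveI : Finite K := Module.finite_of_finite F
  letI : Fintype K := Fintype.ofFinite K
  have hcard : Fintype.card K = Fintype.card F ^ 2 := by
    rw [Module.card_eq_pow_finrank (K := F), hK]
  have h2K : (2 : K) ≠ 0 := by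
    have := (map_ne_zero (algebraMap F K)).mpr h2
    rwa [map_ofNat] at this
  have h5K : (5 : K) ≠ 0 := by
    have := (map_ne_zero (algebraMap F K)).mpr h5
    rwa [map_ofNat] at this
  have hF2 : ringChar F ≠ 2 := fun h => h2 (by
    have := ringChar.Nat.cast_ringChar (R := F)
    rw [h] at this
    exact_mod_cast this)
  have hK2 : ringChar K ≠ 2 := fun h => h2K (by
    have := ringChar.Nat.cast_ringChar (R := K)
    rw [h] at this
    exact_mod_cast this)
  have hodd := FiniteField.odd_card_of_char_ne_two hF2
  have hs : IsSquare (5 : K) := by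
    rw [FiniteField.isSquare_iff hK2 h5K, hcard]
    obtain ⟨k, hk⟩ : ∃ k, Fintype.card F = 2 * k + 1 := ⟨Fintype.card F / 2, by omega⟩
    have e : Fintype.card F ^ 2 / 2 = (Fintype.card F - 1) * (k + 1) := by
      rw [hk]
      have : (2 * k + 1) ^ 2 = 2 * (2 * k * (k + 1)) + 1 := by ring
      rw [this, Nat.add_sub_cancel]
      omega
    have h1 : (5 : F) ^ (Fintype.card F - 1) = 1 := FiniteField.pow_card_sub_one_eq_one 5 h5
    have h1K : (5 : K) ^ (Fintype.card F - 1) = 1 := by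
      have := congrArg (algebraMap F K) h1
      rwa [map_pow, map_ofNat, map_one] at this
    rw [e, pow_mul, h1K, one_pow]
  obtain ⟨s, hs⟩ := hs
  refine ⟨(s - 1) / 2, ?_⟩
  field_simp
  linear_combination -hs

/-- the decomposition map -/
noncomputable def bigHom {F K : Type} [Field F] [Field K] [Algebra F K] (w : F) (hw : w ^ 3 = 1)
    (a : K) (ha : a ^ 2 = 1 - a) :
    MonoidAlgebra F (Multiplicative (ZMod 3) × DihedralGroup 5) →ₐ[F]
      ((Fin 6 → F) × (Fin 3 → Matrix (Fin 2) (Fin 2) K)) :=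
  let χ : Fin 3 → Multiplicative (ZMod 3) →* F :=
    fun i => chiC (w ^ (i : ℕ)) (by rw [← pow_mul, mul_comm, pow_mul, hw, one_pow])
  let l := fun i => MonoidAlgebra.lift F F _ (tensHom (χ i) (1 : DihedralGroup 5 →* F))
  let s := fun i => MonoidAlgebra.lift F F _ (tensHom (χ i) (sgnD F))
  AlgHom.prod (AlgHom.pi (fun j => ![l 0, l 1, l 2, s 0, s 1, s 2] j))
    (AlgHom.pi (fun i => MonoidAlgebra.lift F _ _ (tensHom (χ i) (rhoD a ha))))

theorem bigHom_inj {F K : Type} [Field F] [Field K] [Algebra F K] (w : F) (hw : w ^ 3 = 1)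
    (hw' : w ^ 2 + w + 1 = 0)
    (a : K) (ha : a ^ 2 = 1 - a) (haF : ∀ x : F, algebraMap F K x ≠ a)
    (h2 : (2 : F) ≠ 0) (h3 : (3 : F) ≠ 0) (h5 : (5 : F) ≠ 0) :
    Function.Injective (bigHom w hw a ha) := by
  rw [injective_iff_map_eq_zero]
  intro x hx
  have hx1 := congrArg Prod.fst hx
  have hx2 := congrArg Prod.snd hx
  have key : ∀ (i : Fin 3) (hwi : (w ^ (i : ℕ)) ^ 3 = 1) (d : DihedralGroup 5),
      ∑ c, chiC (w ^ (i : ℕ)) hwi c * x.coeff (c, d) = 0 := by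
    intro i hwi
    have e3 : MonoidAlgebra.lift F _ _ (tensHom (chiC (w ^ (i : ℕ)) hwi) (rhoD a ha)) x = 0 :=
      congrFun hx2 i
    have e1 : MonoidAlgebra.lift F F _
        (tensHom (chiC (w ^ (i : ℕ)) hwi) (1 : DihedralGroup 5 →* F)) x = 0 := by
      fin_cases i
      · exact congrFun hx1 0
      · exact congrFun hx1 1
      · exact congrFun hx1 2
    have e2 : MonoidAlgebra.lift F F _
        (tensHom (chiC (w ^ (i : ℕ)) hwi) (sgnD F)) x = 0 := by
      fin_cases i
      · exact congrFun hx1 3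
      · exact congrFun hx1 4
      · exact congrFun hx1 5
    rw [lift_tens] at e1 e2 e3
    have := dih_inj a ha haF h2 h5 _ (by simpa using e1) (by simpa using e2) e3
    exact fun d => congrFun this d
  have hz : ∀ (c : ZMod 3) (d : DihedralGroup 5), x.coeff (Multiplicative.ofAdd c, d) = 0 := by
    intro c d
    have hsum : ∀ g : Multiplicative (ZMod 3) → F, ∑ c, g c =
        g (Multiplicative.ofAdd 0) + g (Multiplicative.ofAdd 1) + g (Multiplicative.ofAdd 2) :=
      fun g => Fin.sum_univ_three (fun i : Fin 3 => g (Multiplicative.ofAdd (i : ZMod 3)))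
    have hv0 : (0 : ZMod 3).val = 0 := rfl
    have hv1 : (1 : ZMod 3).val = 1 := rfl
    have hv2 : (2 : ZMod 3).val = 2 := rfl
    have k0 := key 0 (by simp) d
    have k1 := key 1 (by simpa using hw) d
    have k2 := key 2 (by rw [← pow_mul, mul_comm, pow_mul, hw, one_pow]) d
    rw [hsum] at k0 k1 k2
    simp only [chiC, MonoidHom.coe_mk, OneHom.coe_mk, toAdd_ofAdd, hv0, hv1, hv2, Fin.val_zero,
      Fin.val_one, Fin.val_two, pow_zero, pow_one, one_pow] at k0 k1 k2
    generalize hA : x.coeff (Multiplicative.ofAdd 0, d) = A at *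
    generalize hB : x.coeff (Multiplicative.ofAdd 1, d) = B at *
    generalize hC : x.coeff (Multiplicative.ofAdd 2, d) = C at *
    have t : ∀ u : F, 3 * u = 0 → u = 0 := fun u hu => (mul_eq_zero.mp hu).resolve_left h3
    have hA0 : A = 0 := t _ (by
      linear_combination k0 + k1 + k2 - (B + C + C * (w ^ 2 - w)) * hw')
    have hB0 : B = 0 := t _ (by
      linear_combination k0 + w ^ 2 * k1 + w * k2 - (A + C) * hw' - (2 * B + C * (w + w ^ 2)) * hw)
    have hC0 : C = 0 := t _ (by
      linear_combination k0 + w * k1 + w ^ 2 * k2 - (A + B) * hw' -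
        (B * w + C * (w ^ 3 + 2)) * hw)
    revert c
    intro (c : Fin 3)
    fin_cases c
    · exact hA.trans hA0
    · exact hB.trans hB0
    · exact hC.trans hC0
  ext ⟨c, d⟩
  exact hz c.toAdd d

theorem stmt_18 (F : Type) [Field F] [Fintype F] (p : ℕ) (hchar : CharP F p) (hp : 5 < p)
    (hq : Fintype.card F % 30 = 7 ∨ Fintype.card F % 30 = 13)
    (K : Type) [Field K] [Algebra F K] (hK : Module.finrank F K = 2) :
    let G := Multiplicative (ZMod 3) × DihedralGroup 5
    let q := Fintype.card F
    Nonempty (MonoidAlgebra F G ≃ₐ[F]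
      ((Fin 6 → F) × (Fin 3 → Matrix (Fin 2) (Fin 2) K))) ∧
    Nonempty ((MonoidAlgebra F G)ˣ ≃*
      ((Fin 6 → Multiplicative (ZMod (q - 1))) × (Fin 3 → GL (Fin 2) K))) := by
  classical
  intro G q
  have hne : ∀ n : ℕ, 0 < n → n < 6 → (n : F) ≠ 0 := by
    intro n hn hn' h
    have := Nat.le_of_dvd hn ((CharP.cast_eq_zero_iff F p n).mp h)
    omega
  have h2 : (2 : F) ≠ 0 := by exact_mod_cast hne 2 (by norm_num) (by norm_num)
  have h3 : (3 : F) ≠ 0 := by exact_mod_cast hne 3 (by norm_num) (by norm_num)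
  have h5 : (5 : F) ≠ 0 := by exact_mod_cast hne 5 (by norm_num) (by norm_num)
  obtain ⟨w, hw'⟩ := exists_cube_root F (by omega)
  have hw : w ^ 3 = 1 := by linear_combination (w - 1) * hw'
  obtain ⟨a, ha⟩ := exists_golden F K hK h2 h5
  have haF : ∀ x : F, algebraMap F K x ≠ a := by
    intro x hx
    apply no_golden F (by omega) x
    apply (algebraMap F K).injective
    simp [hx, ha]
  have hinj := bigHom_inj w hw hw' a ha haF h2 h3 h5
  haveI : Module.Finite F K := Module.finite_of_finrank_pos (by omega)
  have hdim : Module.finrank F (MonoidAlgebra F G) =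
      Module.finrank F ((Fin 6 → F) × (Fin 3 → Matrix (Fin 2) (Fin 2) K)) := by
    have hl : Module.finrank F (MonoidAlgebra F G) = 30 := by
      rw [(MonoidAlgebra.coeffLinearEquiv F).finrank_eq, Module.finrank_finsupp_self]
      simp [G, Fintype.card_prod, ZMod.card, DihedralGroup.card]
    have : Module.Finite F (Matrix (Fin 2) (Fin 2) K) := Module.Finite.matrix
    rw [hl, Module.finrank_prod, Module.finrank_pi, Module.finrank_pi_fintype]
    simp [Module.finrank_matrix, hK]
  have hbij : Function.Bijective (bigHom w hw a ha) :=
    ⟨hinj, (LinearMap.injective_iff_surjective_of_finrank_eq_finrank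
      (f := (bigHom w hw a ha).toLinearMap) hdim).mp hinj⟩
  let Φ : MonoidAlgebra F G ≃ₐ[F] ((Fin 6 → F) × (Fin 3 → Matrix (Fin 2) (Fin 2) K)) :=
    AlgEquiv.ofBijective (bigHom w hw a ha) hbij
  refine ⟨⟨Φ⟩, ⟨?_⟩⟩
  have ec : Fˣ ≃* Multiplicative (ZMod (q - 1)) :=
    mulEquivOfCyclicCardEq (by
      rw [Nat.card_eq_fintype_card, Fintype.card_units, Nat.card_congr Multiplicative.toAdd,
        Nat.card_zmod])
  exact (Units.mapEquiv Φ.toMulEquiv).trans (MulEquiv.prodUnits.trans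
    (MulEquiv.prodCongr (MulEquiv.piUnits.trans (MulEquiv.piCongrRight fun _ => ec))
      MulEquiv.piUnits))
end
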